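/- arXiv:1806.00220 — 3 statements merged into one kernel-verified Lean document; each statement's English description precedes it below -/
import Mathlib

section
/- Let X be a normal Hausdorff space, I a type, and V : I → Set X a family of nonempty pairwise disjoint subsets whose union W := ⋃ i, V i is closed in X and carries the discrete subspace topology. Let s be the equivalence relation on X relating x and y iff x = y or x and y lie in a common V i, let q : X → Quotient s be the quotient map, and for an ultrafilter U on I set V_U := ⋂_{J ∈ U} closure (stoneCechUnit '' ⋃_{i ∈ J} V i) ⊆ StoneCech X. Then Quotient s is a normal Hausdorff space, and the continuous extension Q : StoneCech X → StoneCech (Quotient s) of stoneCechUnit ∘ q is a surjection satisfying: for all a, b : StoneCech X, Q a = Q b if and only if a = b or there exists an ultrafilter U on I with a ∈ V_U and b ∈ V_U. Hence β(X/∼) is the quotient of βX whose nontrivial classes are the sets V_U, one for each ultrafilter U on I. -/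
/-!
Write `V_U` for the limit of the sets `V i` in `βX` along an ultrafilter `U` on `I`. Two facts
determine the fibres of `Q`.

* If `f : X → Y` is closed and continuous and `Y` is normal, then the kernel of `βf` is the closure
  in `βX × βX` of the kernel of `f`. Indeed, if closed neighbourhoods of `a` and `b` had no
  identified points, their traces on `X` would have disjoint closed images in `Y`; these images have
  disjoint closures in `βY`, whereas both closures contain the common value of `βf`.
* In any topological space the closure of `⋃ i, S i` is the union over all ultrafilters `U` of the
  limits of `S` along `U`, and these limits commute with binary products.

The kernel of the quotient map is the diagonal together with `⋃ i, V i × V i`, so its closure is the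
diagonal together with `⋃ U, V_U × V_U`. The quotient map is closed because saturating a closed set
adds to it a union of some of the `V i`, and every such union is closed.
-/

open Set Filter Topology

section UltraLimit

variable {I Z W : Type*} [TopologicalSpace Z] [TopologicalSpace W]

/-- The limit of a family of sets along an ultrafilter, in the sense of Kuratowski. It is defined as
the outer limit, which agrees with the inner one along an ultrafilter, see `mem_ultraLimit_iff`. -/
def ultraLimit (U : Ultrafilter I) (S : I → Set Z) : Set Z :=
  ⋂ J ∈ U, closure (⋃ i ∈ J, S i)

theorem mem_ultraLimit_iff {U : Ultrafilter I} {S : I → Set Z} {z : Z} :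
    z ∈ ultraLimit U S ↔ ∀ N ∈ 𝓝 z, ∀ᶠ i in U, (N ∩ S i).Nonempty := by
  simp only [ultraLimit, mem_iInter₂, mem_closure_iff_nhds, inter_iUnion₂, nonempty_biUnion]
  constructor
  · intro h N hN
    by_contra hfail
    obtain ⟨i, hi, hNi⟩ := h _ (Ultrafilter.compl_mem_iff_notMem.2 hfail) N hN
    exact hi hNi
  · intro h J hJ N hN
    exact ((h N hN).and hJ).exists.imp fun i hi => hi.symm

theorem ultraLimit_subset_closure_iUnion (U : Ultrafilter I) (S : I → Set Z) :
    ultraLimit U S ⊆ closure (⋃ i, S i) :=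
  (iInter₂_subset univ univ_mem).trans (closure_mono (iUnion₂_subset_iUnion _ S))

theorem closure_iUnion_eq_iUnion_ultraLimit (S : I → Set Z) :
    closure (⋃ i, S i) = ⋃ U : Ultrafilter I, ultraLimit U S := by
  refine Subset.antisymm (fun z hz => ?_) (iUnion_subset fun U =>
    ultraLimit_subset_closure_iUnion U S)
  choose index mem_index using fun w : ⋃ i, S i => mem_iUnion.1 w.2
  have : (comap ((↑) : (⋃ i, S i) → Z) (𝓝 z)).NeBot := mem_closure_iff_comap_neBot.1 hz
  let G := Ultrafilter.of (comap ((↑) : (⋃ i, S i) → Z) (𝓝 z))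
  refine mem_iUnion.2 ⟨G.map index, mem_ultraLimit_iff.2 fun N hN => ?_⟩
  have hGN : ∀ᶠ w : ⋃ i, S i in G, (w : Z) ∈ N := Ultrafilter.of_le _ (preimage_mem_comap hN)
  exact hGN.mono fun w hw => ⟨w, hw, mem_index w⟩

theorem ultraLimit_prod (U : Ultrafilter I) (S : I → Set Z) (T : I → Set W) :
    ultraLimit U (fun i => S i ×ˢ T i) = ultraLimit U S ×ˢ ultraLimit U T := by
  ext ⟨z, w⟩
  simp only [mem_prod, mem_ultraLimit_iff]
  constructor
  · refine fun h => ⟨fun N hN => ?_, fun N hN => ?_⟩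
    · exact (h _ (prod_mem_nhds hN univ_mem)).mono fun i ⟨p, hpN, hp⟩ => ⟨p.1, hpN.1, hp.1⟩
    · exact (h _ (prod_mem_nhds univ_mem hN)).mono fun i ⟨p, hpN, hp⟩ => ⟨p.2, hpN.2, hp.2⟩
  · rintro ⟨hz, hw⟩ N hN
    obtain ⟨A, hA, B, hB, hABN⟩ := mem_nhds_prod_iff.1 hN
    filter_upwards [hz A hA, hw B hB] with i ⟨x, hxA, hx⟩ ⟨y, hyB, hy⟩
    exact ⟨(x, y), hABN ⟨hxA, hyB⟩, hx, hy⟩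

theorem closure_iUnion_prod_eq_iUnion_ultraLimit_prod (S : I → Set Z) (T : I → Set W) :
    closure (⋃ i, S i ×ˢ T i) = ⋃ U : Ultrafilter I, ultraLimit U S ×ˢ ultraLimit U T := by
  simp only [closure_iUnion_eq_iUnion_ultraLimit, ultraLimit_prod]

end UltraLimit

section ClosedMap

variable {X Y : Type*} [TopologicalSpace X] [TopologicalSpace Y] {f : X → Y}

theorem normalSpace_of_isClosedMap [NormalSpace X] (hf : Continuous f) (hcl : IsClosedMap f)
    (hsurj : Function.Surjective f) : NormalSpace Y where
  normal A B hA hB hAB := by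
    obtain ⟨U, V, hU, hV, hAU, hBV, hUV⟩ :=
      normal_separation (hA.preimage hf) (hB.preimage hf) (hAB.preimage f)
    refine ⟨kernImage f U, kernImage f V, isClosedMap_iff_kernImage.1 hcl hU,
      isClosedMap_iff_kernImage.1 hcl hV, subset_kernImage_iff.2 hAU, subset_kernImage_iff.2 hBV,
      Disjoint.of_preimage hsurj (hUV.mono ?_ ?_)⟩ <;>
    exact subset_kernImage_iff.1 Subset.rfl

theorem t1Space_of_isClosedMap [T1Space X] (hcl : IsClosedMap f) (hsurj : Function.Surjective f) :
    T1Space Y where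
  t1 := hsurj.forall.2 fun _ => image_singleton (f := f) ▸ hcl _ isClosed_singleton

theorem t4Space_of_isClosedMap [T4Space X] (hf : Continuous f) (hcl : IsClosedMap f)
    (hsurj : Function.Surjective f) : T4Space Y :=
  have := normalSpace_of_isClosedMap hf hcl hsurj
  have := t1Space_of_isClosedMap hcl hsurj
  inferInstance

end ClosedMap

theorem closure_image_diagonal_of_denseRange {X Z : Type*} [TopologicalSpace Z] [T2Space Z]
    {j : X → Z} (hj : DenseRange j) :
    closure (Prod.map j j '' diagonal X) = diagonal Z := by
  refine Subset.antisymm (closure_minimal ?_ isClosed_diagonal) ?_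
  · rintro _ ⟨p, hp, rfl⟩
    exact congrArg j hp
  · rintro ⟨z, w⟩ (rfl : z = w)
    refine map_mem_closure (f := fun z => (z, z)) (by fun_prop) (hj z) ?_
    rintro _ ⟨x, rfl⟩
    exact ⟨(x, x), rfl, rfl⟩

section StoneCech

variable {X Y : Type*} [TopologicalSpace X] [TopologicalSpace Y] {f : X → Y}

/-- The continuous map `βX → βY` induced by a continuous map `X → Y`. -/
noncomputable def stoneCechMap (hf : Continuous f) : StoneCech X → StoneCech Y :=
  stoneCechExtend (continuous_stoneCechUnit.comp hf)

theorem continuous_stoneCechMap (hf : Continuous f) : Continuous (stoneCechMap hf) :=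
  continuous_stoneCechExtend _

theorem stoneCechMap_stoneCechUnit (hf : Continuous f) (x : X) :
    stoneCechMap hf (stoneCechUnit x) = stoneCechUnit (f x) :=
  stoneCechExtend_stoneCechUnit _ x

theorem stoneCechMap_surjective (hf : Continuous f) (hdense : DenseRange f) :
    Function.Surjective (stoneCechMap hf) := by
  have hrange : DenseRange (stoneCechUnit ∘ f) :=
    denseRange_stoneCechUnit.comp hdense continuous_stoneCechUnit
  have hQ : DenseRange (stoneCechMap hf) :=
    hrange.mono (range_subset_iff.2 fun x => ⟨_, stoneCechMap_stoneCechUnit hf x⟩)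
  exact range_eq_univ.1 <|
    (isCompact_range (continuous_stoneCechMap hf)).isClosed.closure_eq ▸ hQ.closure_range

theorem disjoint_closure_image_stoneCechUnit [NormalSpace X] {A B : Set X} (hA : IsClosed A)
    (hB : IsClosed B) (hAB : Disjoint A B) :
    Disjoint (closure (stoneCechUnit '' A)) (closure (stoneCechUnit '' B)) := by
  obtain ⟨g, hgA, hgB, hg⟩ := exists_continuous_zero_one_of_isClosed hA hB hAB
  have hg' : Continuous fun x => (⟨g x, hg x⟩ : unitInterval) := by fun_prop
  let G := stoneCechExtend hg'
  have closure_subset {C : Set X} {c : unitInterval} (hC : EqOn g (fun _ => c) C) :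
      closure (stoneCechUnit '' C) ⊆ G ⁻¹' {c} := by
    refine closure_minimal (image_subset_iff.2 fun x hx => ?_)
      (isClosed_singleton.preimage (continuous_stoneCechExtend hg'))
    exact (stoneCechExtend_stoneCechUnit hg' x).trans (Subtype.ext (hC hx))
  exact ((disjoint_singleton.2 zero_ne_one).preimage G).mono
    (closure_subset (c := 0) hgA) (closure_subset (c := 1) hgB)

theorem mem_closure_image_preimage_stoneCechUnit {a : StoneCech X} {N : Set (StoneCech X)}
    (hN : N ∈ 𝓝 a) : a ∈ closure (stoneCechUnit '' (stoneCechUnit ⁻¹' N : Set X)) := by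
  refine mem_closure_iff_nhds.2 fun M hM => ?_
  obtain ⟨x, hxM, hxN⟩ := denseRange_stoneCechUnit.mem_nhds (inter_mem hM hN)
  exact ⟨_, hxM, x, hxN, rfl⟩

theorem not_disjoint_image_of_stoneCechMap_eq [NormalSpace Y] (hf : Continuous f)
    (hcl : IsClosedMap f) {a b : StoneCech X} (hab : stoneCechMap hf a = stoneCechMap hf b)
    {A B : Set X} (hA : IsClosed A) (hB : IsClosed B) (ha : a ∈ closure (stoneCechUnit '' A))
    (hb : b ∈ closure (stoneCechUnit '' B)) : ¬ Disjoint (f '' A) (f '' B) := by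
  intro hdisj
  have map_mem {c : StoneCech X} {C : Set X} (hc : c ∈ closure (stoneCechUnit '' C)) :
      stoneCechMap hf c ∈ closure (stoneCechUnit '' (f '' C)) := by
    refine map_mem_closure (continuous_stoneCechMap hf) hc (forall_mem_image.2 fun x hx => ?_)
    exact ⟨f x, mem_image_of_mem f hx, (stoneCechMap_stoneCechUnit hf x).symm⟩
  exact (disjoint_closure_image_stoneCechUnit (hcl _ hA) (hcl _ hB) hdisj).le_bot
    ⟨map_mem ha, hab ▸ map_mem hb⟩

theorem stoneCechMap_eq_iff_mem_closure [NormalSpace Y] (hf : Continuous f) (hcl : IsClosedMap f)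
    {a b : StoneCech X} :
    stoneCechMap hf a = stoneCechMap hf b ↔
      (a, b) ∈ closure (Prod.map stoneCechUnit stoneCechUnit '' {p : X × X | f p.1 = f p.2}) := by
  constructor
  · intro hab
    refine (mem_closure_iff_nhds_basis
      ((closed_nhds_basis a).prod_nhds (closed_nhds_basis b))).2 ?_
    rintro ⟨A, B⟩ ⟨⟨hA, hAcl⟩, hB, hBcl⟩
    obtain ⟨_, ⟨x, hx, rfl⟩, y, hy, hxy⟩ := not_disjoint_iff.1 <|
      not_disjoint_image_of_stoneCechMap_eq hf hcl hab (hAcl.preimage continuous_stoneCechUnit)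
        (hBcl.preimage continuous_stoneCechUnit) (mem_closure_image_preimage_stoneCechUnit hA)
        (mem_closure_image_preimage_stoneCechUnit hB)
    exact ⟨_, ⟨(x, y), hxy.symm, rfl⟩, hx, hy⟩
  · have hQ := continuous_stoneCechMap hf
    have kernel_closed : IsClosed {p : StoneCech X × StoneCech X |
        stoneCechMap hf p.1 = stoneCechMap hf p.2} :=
      isClosed_eq (hQ.comp continuous_fst) (hQ.comp continuous_snd)
    refine fun hab => closure_minimal ?_ kernel_closed hab
    rintro _ ⟨⟨x, y⟩, hxy, rfl⟩
    simpa only [mem_ofPred_eq, Prod.map, stoneCechMap_stoneCechUnit] using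
      congrArg stoneCechUnit hxy

end StoneCech

section Quotient

variable {X I : Type*} {V : I → Set X} {s : Setoid X}

theorem setOf_quotientMk_eq (hs : ∀ x y : X, s.r x y ↔ x = y ∨ ∃ i, x ∈ V i ∧ y ∈ V i) :
    {p : X × X | Quotient.mk s p.1 = Quotient.mk s p.2} = diagonal X ∪ ⋃ i, V i ×ˢ V i := by
  ext ⟨x, y⟩
  simpa only [mem_ofPred_eq, Quotient.eq, mem_union, mem_diagonal_iff, mem_iUnion, mem_prod]
    using hs x y

theorem closure_image_setOf_quotientMk_eq {Z : Type*} [TopologicalSpace Z] [T2Space Z]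
    (hs : ∀ x y : X, s.r x y ↔ x = y ∨ ∃ i, x ∈ V i ∧ y ∈ V i) {j : X → Z} (hj : DenseRange j) :
    closure (Prod.map j j '' {p : X × X | Quotient.mk s p.1 = Quotient.mk s p.2}) =
      diagonal Z ∪ ⋃ U : Ultrafilter I,
        ultraLimit U (fun i => j '' V i) ×ˢ ultraLimit U (fun i => j '' V i) := by
  simp only [setOf_quotientMk_eq hs, image_union, closure_union, image_iUnion, prodMap_image_prod,
    closure_image_diagonal_of_denseRange hj, closure_iUnion_prod_eq_iUnion_ultraLimit_prod]

variable [TopologicalSpace X]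

theorem isClosedMap_quotientMk (hV : ∀ J : Set I, IsClosed (⋃ i ∈ J, V i))
    (hs : ∀ x y : X, s.r x y ↔ x = y ∨ ∃ i, x ∈ V i ∧ y ∈ V i) :
    IsClosedMap (Quotient.mk s) := by
  intro A hA
  have saturation : Quotient.mk s ⁻¹' (Quotient.mk s '' A) =
      A ∪ ⋃ i ∈ {i | (V i ∩ A).Nonempty}, V i := by
    ext x
    constructor
    · rintro ⟨y, hyA, hyx⟩
      rcases (hs y x).1 (Quotient.exact hyx) with rfl | ⟨i, hyi, hxi⟩
      · exact Or.inl hyA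
      · exact Or.inr (mem_biUnion (show i ∈ {i | (V i ∩ A).Nonempty} from ⟨y, hyi, hyA⟩) hxi)
    · rintro (hxA | hx)
      · exact mem_image_of_mem _ hxA
      · obtain ⟨i, ⟨y, hyi, hyA⟩, hxi⟩ := mem_iUnion₂.1 hx
        exact ⟨y, hyA, Quotient.sound ((hs y x).2 (Or.inr ⟨i, hyi, hxi⟩))⟩
  have hquot : IsQuotientMap (Quotient.mk s) := isQuotientMap_quotient_mk'
  rw [← hquot.isClosed_preimage, saturation]
  exact hA.union (hV _)

end Quotient

theorem stoneCech_quotient_classes_general {X : Type*} [TopologicalSpace X] [T4Space X]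
    {I : Type*} (V : I → Set X) (s : Setoid X) (hclosed : IsClosedMap (Quotient.mk s))
    (hs : ∀ x y : X, s.r x y ↔ x = y ∨ ∃ i, x ∈ V i ∧ y ∈ V i) :
    T4Space (Quotient s) ∧
      Function.Surjective (stoneCechMap (continuous_quotient_mk' (s := s))) ∧
      ∀ a b : StoneCech X,
        stoneCechMap (continuous_quotient_mk' (s := s)) a =
          stoneCechMap (continuous_quotient_mk' (s := s)) b ↔
        a = b ∨ ∃ U : Ultrafilter I,
          a ∈ ultraLimit U (fun i => stoneCechUnit '' V i) ∧
          b ∈ ultraLimit U (fun i => stoneCechUnit '' V i) := by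
  have hT4 : T4Space (Quotient s) :=
    t4Space_of_isClosedMap continuous_quotient_mk' hclosed Quotient.mk_surjective
  refine ⟨hT4, stoneCechMap_surjective _ Quotient.mk_surjective.denseRange, fun a b => ?_⟩
  rw [stoneCechMap_eq_iff_mem_closure _ hclosed,
    closure_image_setOf_quotientMk_eq hs denseRange_stoneCechUnit]
  simp only [mem_union, mem_diagonal_iff, mem_iUnion, mem_prod]

/-- Theorem 4.9: let `X` be normal Hausdorff, `(V i)` a family of nonempty pairwise disjoint
subsets whose union `W` is closed and discrete, and `s` the equivalence relation identifying
the points within each `V i`. Then `X/s` is normal Hausdorff and the Stone-Čech extension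
`Q : βX → β(X/s)` of the quotient map is a surjection whose nontrivial fibres are exactly the
sets `V_U = ⋂_{J ∈ U} closure (stoneCechUnit '' ⋃_{i ∈ J} V i)`, one for each ultrafilter `U`
on `I`. Hence `β(X/s) = (βX)/∼_β`. -/
theorem stoneCech_quotient_classes
    {X : Type*} [TopologicalSpace X] [T4Space X] {I : Type*}
    (V : I → Set X) (hne : ∀ i, (V i).Nonempty)
    (hdisj : Pairwise (Function.onFun Disjoint V))
    (hWclosed : IsClosed (⋃ i, V i)) (hWdiscrete : DiscreteTopology (⋃ i, V i))
    (s : Setoid X) (hs : ∀ x y : X, s.r x y ↔ x = y ∨ ∃ i, x ∈ V i ∧ y ∈ V i) :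
    T4Space (Quotient s) ∧
      Function.Surjective
        (stoneCechExtend (continuous_stoneCechUnit.comp continuous_quotient_mk' :
          Continuous fun x : X => stoneCechUnit (Quotient.mk s x))) ∧
      ∀ a b : StoneCech X,
        stoneCechExtend (continuous_stoneCechUnit.comp continuous_quotient_mk' :
            Continuous fun x : X => stoneCechUnit (Quotient.mk s x)) a =
          stoneCechExtend (continuous_stoneCechUnit.comp continuous_quotient_mk' :
            Continuous fun x : X => stoneCechUnit (Quotient.mk s x)) b ↔
        a = b ∨ ∃ U : Ultrafilter I,
          (a ∈ ⋂ (J : Set I) (_ : J ∈ U), closure (stoneCechUnit '' ⋃ i ∈ J, V i)) ∧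
          (b ∈ ⋂ (J : Set I) (_ : J ∈ U), closure (stoneCechUnit '' ⋃ i ∈ J, V i)) := by
  have hV (J : Set I) : IsClosed (⋃ i ∈ J, V i) :=
    isClosed_of_subset_discrete_closed (iUnion₂_subset_iUnion _ V) ⟨hWdiscrete⟩ hWclosed
  simpa only [stoneCechMap, ultraLimit, image_iUnion₂] using
    stoneCech_quotient_classes_general V s (isClosedMap_quotientMk hV hs) hs
end

section
/- Let X be a normal Hausdorff space and V ⊆ X a nonempty closed subset carrying the discrete subspace topology. Let s be the equivalence relation on X relating x and y iff x = y or both x, y ∈ V, and let q : X → Quotient s be the quotient map collapsing V to a single point. Then Quotient s is a normal Hausdorff space, and the continuous extension Q : StoneCech X → StoneCech (Quotient s) of stoneCechUnit ∘ q is a surjection satisfying: for all a, b : StoneCech X, Q a = Q b if and only if a = b or both a and b lie in closure (stoneCechUnit '' V). Hence β(X/V) is the quotient of βX collapsing the closure of V to a point. -/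
/-!
Collapsing a closed subset `V` of a normal space is a closed map, as the saturation of a closed
set `C` is `C` or `C ∪ V`, and closed continuous surjections preserve normality.

Now let `V` be any subset of any space `X`, and let `K` be the closure of its image in `βX`. By the
above, `βX / K` is compact Hausdorff. The projection `βX → βX / K` is constant on the image of `V`,
so its restriction to `X` descends to `X / V` and then extends to `β(X / V)`. Thus `βX → βX / K`
factors through `βX → β(X / V)`, which therefore identifies no more points than the collapse of `K`
does. Conversely, `βX → β(X / V)` is constant on `K` by continuity.
-/

open Function Set Topology

section ClosedMap

variable {X Y : Type*} [TopologicalSpace X] [TopologicalSpace Y] {f : X → Y}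

theorem t1Space_of_isClosedMap_of_surjective [T1Space X] (hf : IsClosedMap f)
    (hsurj : Surjective f) : T1Space Y where
  t1 := hsurj.forall.2 fun _ ↦ image_singleton (f := f) ▸ hf _ isClosed_singleton

theorem normalSpace_of_isClosedMap_of_surjective [NormalSpace X] (hcont : Continuous f)
    (hf : IsClosedMap f) (hsurj : Surjective f) : NormalSpace Y where
  normal _ _ hA hB hAB := separatedNhds_iff_disjoint.2 <| (Filter.disjoint_comap_iff hsurj).1 <|
    (disjoint_nhdsSet_nhdsSet (hA.preimage hcont) (hB.preimage hcont) (hAB.preimage f)).mono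
      hf.comap_nhdsSet_le hf.comap_nhdsSet_le

end ClosedMap

/-- The equivalence relation on `X` whose quotient is `X / V`, the space obtained by collapsing the
subset `V` to a point. For `V = ∅` it is equality, so no point is adjoined to `X`. -/
def collapseSetoid {X : Type*} (V : Set X) : Setoid X where
  r x y := x = y ∨ x ∈ V ∧ y ∈ V
  iseqv :=
    { refl := fun _ ↦ .inl rfl
      symm := by grind
      trans := by grind }

namespace collapseSetoid

variable {X : Type*} {V : Set X}

theorem mk_eq_mk_iff {x y : X} :
    Quotient.mk (collapseSetoid V) x = Quotient.mk (collapseSetoid V) y ↔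
      x = y ∨ x ∈ V ∧ y ∈ V :=
  Quotient.eq

theorem preimage_image_mk (C : Set X) :
    Quotient.mk (collapseSetoid V) ⁻¹' (Quotient.mk (collapseSetoid V) '' C) =
      C ∪ {x ∈ V | (C ∩ V).Nonempty} := by
  ext x
  simp only [mem_preimage, mem_image, mk_eq_mk_iff, mem_union, mem_ofPred_eq, Set.Nonempty,
    mem_inter_iff]
  grind

variable [TopologicalSpace X]

theorem isClosedMap_mk (hV : IsClosed V) : IsClosedMap (Quotient.mk (collapseSetoid V)) := by
  intro C hC
  suffices IsClosed (Quotient.mk (collapseSetoid V) ⁻¹' (Quotient.mk (collapseSetoid V) '' C)) from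
    isQuotientMap_quotient_mk'.isClosed_preimage.1 this
  rw [preimage_image_mk]
  exact hC.union (hV.inter isClosed_const)

theorem t4Space_quotient [T4Space X] (hV : IsClosed V) : T4Space (Quotient (collapseSetoid V)) :=
  have := t1Space_of_isClosedMap_of_surjective (isClosedMap_mk hV) Quotient.mk_surjective
  have := normalSpace_of_isClosedMap_of_surjective continuous_quotient_mk' (isClosedMap_mk hV)
    Quotient.mk_surjective
  inferInstance

end collapseSetoid

section StoneCech

variable {X Y K : Type*} [TopologicalSpace X] [TopologicalSpace Y] [TopologicalSpace K]
  [CompactSpace K] [T2Space K]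

theorem stoneCechExtend_surjective {f : X → K} (hf : Continuous f) (hd : DenseRange f) :
    Surjective (stoneCechExtend hf) := by
  have hdense : DenseRange (stoneCechExtend hf) :=
    .of_comp (g := stoneCechUnit) (by rwa [stoneCechExtend_extends])
  have hclosed : IsClosed (range (stoneCechExtend hf)) :=
    (continuous_stoneCechExtend hf).isClosedMap.isClosed_range
  rw [← range_eq_univ, ← hclosed.closure_eq, hdense.closure_range]

theorem stoneCechExtend_eq_of_mem_closure {f : X → K} (hf : Continuous f) {V : Set X}
    (hV : (f '' V).Subsingleton) {a b : StoneCech X} (ha : a ∈ closure (stoneCechUnit '' V))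
    (hb : b ∈ closure (stoneCechUnit '' V)) : stoneCechExtend hf a = stoneCechExtend hf b := by
  have himage : stoneCechExtend hf '' (stoneCechUnit '' V) = f '' V := by
    rw [← image_comp, stoneCechExtend_extends]
  have hmem {c : StoneCech X} (hc : c ∈ closure (stoneCechUnit '' V)) :
      stoneCechExtend hf c ∈ closure (f '' V) :=
    himage ▸ image_closure_subset_closure_image (continuous_stoneCechExtend hf)
      (mem_image_of_mem _ hc)
  exact hV.closure (hmem ha) (hmem hb)

theorem factorsThrough_stoneCechExtend {q : X → Y} (hq : IsQuotientMap q) {φ : StoneCech X → K}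
    (hφ : Continuous φ) (hfac : (φ ∘ stoneCechUnit).FactorsThrough q) :
    φ.FactorsThrough (stoneCechExtend (continuous_stoneCechUnit.comp hq.continuous)) := by
  let φX : C(X, K) := ⟨φ ∘ stoneCechUnit, hφ.comp continuous_stoneCechUnit⟩
  let φY : C(Y, K) := hq.lift (f := ⟨q, hq.continuous⟩) φX hfac
  have hφY (x : X) : φY (q x) = φ (stoneCechUnit x) :=
    DFunLike.congr_fun (hq.lift_comp (f := ⟨q, hq.continuous⟩) φX hfac) x
  have hcomp : stoneCechExtend φY.continuous ∘
      stoneCechExtend (continuous_stoneCechUnit.comp hq.continuous) = φ := by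
    refine stoneCech_hom_ext
      ((continuous_stoneCechExtend _).comp (continuous_stoneCechExtend _)) hφ (funext fun x ↦ ?_)
    simp only [comp_apply, stoneCechExtend_stoneCechUnit, hφY]
  intro a b hab
  rw [← hcomp, comp_apply, comp_apply, hab]

theorem stoneCechExtend_mk_collapseSetoid_eq_iff {V : Set X} {a b : StoneCech X} :
    stoneCechExtend (continuous_stoneCechUnit.comp continuous_quotient_mk' :
        Continuous fun x : X ↦ stoneCechUnit (Quotient.mk (collapseSetoid V) x)) a =
      stoneCechExtend (continuous_stoneCechUnit.comp continuous_quotient_mk' :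
        Continuous fun x : X ↦ stoneCechUnit (Quotient.mk (collapseSetoid V) x)) b ↔
      a = b ∨ a ∈ closure (stoneCechUnit '' V) ∧ b ∈ closure (stoneCechUnit '' V) := by
  constructor
  · intro hab
    have : T4Space (Quotient (collapseSetoid (closure (stoneCechUnit '' V)))) :=
      collapseSetoid.t4Space_quotient isClosed_closure
    have hfac : (Quotient.mk (collapseSetoid (closure (stoneCechUnit '' V))) ∘
        stoneCechUnit).FactorsThrough (Quotient.mk (collapseSetoid V)) := by
      intro x y hxy
      have hmem {z : X} (hz : z ∈ V) : stoneCechUnit z ∈ closure (stoneCechUnit '' V) :=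
        subset_closure (mem_image_of_mem _ hz)
      exact collapseSetoid.mk_eq_mk_iff.2 <|
        (collapseSetoid.mk_eq_mk_iff.1 hxy).imp (congrArg _) (.imp hmem hmem)
    exact collapseSetoid.mk_eq_mk_iff.1 <|
      factorsThrough_stoneCechExtend isQuotientMap_quotient_mk' continuous_quotient_mk' hfac hab
  · rintro (rfl | ⟨ha, hb⟩)
    · rfl
    · refine stoneCechExtend_eq_of_mem_closure _ ?_ ha hb
      rintro _ ⟨x, hx, rfl⟩ _ ⟨y, hy, rfl⟩
      exact congrArg stoneCechUnit (collapseSetoid.mk_eq_mk_iff.2 (.inr ⟨hx, hy⟩))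

end StoneCech

theorem stoneCech_quotient_collapse_closed_discrete_general
    {X : Type*} [TopologicalSpace X] [T4Space X]
    (V : Set X) (hVclosed : IsClosed V)
    (s : Setoid X) (hs : ∀ x y : X, s.r x y ↔ x = y ∨ (x ∈ V ∧ y ∈ V)) :
    T4Space (Quotient s) ∧
      Function.Surjective
        (stoneCechExtend (continuous_stoneCechUnit.comp continuous_quotient_mk' :
          Continuous fun x : X ↦ stoneCechUnit (Quotient.mk s x))) ∧
      ∀ a b : StoneCech X,
        stoneCechExtend (continuous_stoneCechUnit.comp continuous_quotient_mk' :
            Continuous fun x : X ↦ stoneCechUnit (Quotient.mk s x)) a =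
          stoneCechExtend (continuous_stoneCechUnit.comp continuous_quotient_mk' :
            Continuous fun x : X ↦ stoneCechUnit (Quotient.mk s x)) b ↔
        a = b ∨ (a ∈ closure (stoneCechUnit '' V) ∧ b ∈ closure (stoneCechUnit '' V)) := by
  obtain rfl : s = collapseSetoid V := Setoid.ext hs
  exact ⟨collapseSetoid.t4Space_quotient hVclosed,
    stoneCechExtend_surjective _
      (denseRange_stoneCechUnit.comp Quotient.mk_surjective.denseRange continuous_stoneCechUnit),
    fun _ _ ↦ stoneCechExtend_mk_collapseSetoid_eq_iff⟩

/-- Corollary 4.10: let `X` be normal Hausdorff and `V ⊆ X` a nonempty closed discrete subset,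
and let `s` be the equivalence relation collapsing `V` to a single point. Then `X/V` is normal
Hausdorff and the Stone-Čech extension `Q : βX → β(X/V)` of the quotient map is a surjection
identifying exactly the points of `closure (stoneCechUnit '' V)`; hence
`β(X/V) = βX / closure(stoneCechUnit '' V)`. -/
theorem stoneCech_quotient_collapse_closed_discrete
    {X : Type*} [TopologicalSpace X] [T4Space X]
    (V : Set X) (hne : V.Nonempty) (hVclosed : IsClosed V) (hVdiscrete : DiscreteTopology V)
    (s : Setoid X) (hs : ∀ x y : X, s.r x y ↔ x = y ∨ (x ∈ V ∧ y ∈ V)) :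
    T4Space (Quotient s) ∧
      Function.Surjective
        (stoneCechExtend (continuous_stoneCechUnit.comp continuous_quotient_mk' :
          Continuous fun x : X => stoneCechUnit (Quotient.mk s x))) ∧
      ∀ a b : StoneCech X,
        stoneCechExtend (continuous_stoneCechUnit.comp continuous_quotient_mk' :
            Continuous fun x : X => stoneCechUnit (Quotient.mk s x)) a =
          stoneCechExtend (continuous_stoneCechUnit.comp continuous_quotient_mk' :
            Continuous fun x : X => stoneCechUnit (Quotient.mk s x)) b ↔
        a = b ∨ (a ∈ closure (stoneCechUnit '' V) ∧ b ∈ closure (stoneCechUnit '' V)) :=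
  stoneCech_quotient_collapse_closed_discrete_general V hVclosed s hs
end

section
/- For every pair of distinct connected components C₁ ≠ C₂ of the subspace G* (i.e. C₁ = connectedComponentIn G* p₁, C₂ = connectedComponentIn G* p₂ for some p₁, p₂ ∈ G* with C₁ ≠ C₂), there exist a finite set X : Finset V and a set 𝒞 of components of G − X (𝒞 : Set (G.ComponentCompl ↑X)) such that C₁ ⊆ closure (stoneCechUnit '' G[X, 𝒞]) and C₂ ⊆ closure (stoneCechUnit '' G[X, 𝒞ᶜ]), where for a set 𝒟 of components of G − X, G[X, 𝒟] ⊆ |G| denotes the induced subcomplex on X ∪ ⋃ {↑c : c ∈ 𝒟}: the set of all points of |G| represented by pairs (d, t) such that both endvertices of the dart d lie in X ∪ ⋃ {↑c : c ∈ 𝒟}. -/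
open SimpleGraph

variable {V : Type*} (G : SimpleGraph V)

/-- The darts of `G` carry the discrete topology. -/
instance : TopologicalSpace G.Dart := ⊥

instance : DiscreteTopology G.Dart := ⟨rfl⟩

/-- The generating relation for the 1-complex: `(d, t) ∼ (d.symm, 1 − t)`, and
`(d, 0) ∼ (d', 0)` whenever `d` and `d'` have the same initial vertex. -/
def oneComplexRel (p q : G.Dart × unitInterval) : Prop :=
  (q.1 = p.1.symm ∧ q.2 = unitInterval.symm p.2) ∨
    (p.2 = 0 ∧ q.2 = 0 ∧ p.1.fst = q.1.fst)

/-- The equivalence relation generated by `oneComplexRel`. -/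
def oneComplexSetoid : Setoid (G.Dart × unitInterval) :=
  Relation.EqvGen.setoid (oneComplexRel G)

/-- The 1-complex `|G|` of the graph `G`. -/
abbrev OneComplex : Type _ :=
  Quotient (oneComplexSetoid G)

/-- The set of vertex points of the 1-complex. -/
def vertexPoints : Set (OneComplex G) :=
  {x | ∃ d : G.Dart, x = Quotient.mk (oneComplexSetoid G) (d, (0 : unitInterval))}

/-- The set of inner edge points of the 1-complex. -/
def innerEdgePoints : Set (OneComplex G) :=
  {x | ∃ (d : G.Dart) (t : unitInterval), 0 < (t : ℝ) ∧ (t : ℝ) < 1 ∧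
    x = Quotient.mk (oneComplexSetoid G) (d, t)}

/-- The Stone-Čech remainder `G*` of the 1-complex `|G|`. -/
def stoneCechRemainder : Set (StoneCech (OneComplex G)) :=
  (Set.range (stoneCechUnit : OneComplex G → StoneCech (OneComplex G)))ᶜ

/-- The part `G[X, 𝒞]` of the 1-complex induced on `X` together with the components in `𝒞`:
all points represented by pairs `(d, t)` whose dart has both endvertices in
`X ∪ ⋃ {↑c : c ∈ 𝒞}`. -/
def inducedPart (X : Finset V) (𝒞 : Set (G.ComponentCompl (X : Set V))) :
    Set (OneComplex G) :=
  {x | ∃ (d : G.Dart) (t : unitInterval),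
    x = Quotient.mk (oneComplexSetoid G) (d, t) ∧
    (d.fst ∈ (X : Set V) ∪ ⋃ c ∈ 𝒞, (c : Set V)) ∧
    (d.snd ∈ (X : Set V) ∪ ⋃ c ∈ 𝒞, (c : Set V))}

/-!
Shrink the closed star of every vertex by a radius function `ε` on the darts, and for a set `C` of
vertices let `shrunkStars ε C` be the union of the shrunken stars at the vertices in `C`. Three
facts drive the proof.

* A bump function with slopes `1 / ε` shows that, in the Stone-Čech compactification, the closure of
  `shrunkStars ε C` is disjoint from that of the subcomplex avoiding `C`.
* If all radii are at most `1 / 2`, stars of adjacent vertices overlap, so `shrunkStars ε C` is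
  connected when `C` is.
* `K ε`, the intersection of the closures of `shrunkStars ε Xᶜ` over all finite `X`, is a compact
  subset of `G*`, and every closed subset of the compactification that lies in `G*` is contained in
  some `K ε`. The complex need not be locally compact at its vertices, which is why the radii have
  to be adapted to the given closed set.

Choose `ε` with `p₁, p₂ ∈ K ε`. As `p₁` and `p₂` lie in distinct components of the compact set
`K ε`, it is covered by disjoint open sets `U ∋ p₁` and `V ∋ p₂`, and by compactness so is the
closure of `shrunkStars ε Xᶜ` for some finite `X`. By connectedness each component of `G - X` then
goes to `U` or to `V`, which defines `𝒞`. The first fact makes the traces on `G*` of the closures of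
`G[X, 𝒞]` and `G[X, 𝒞ᶜ]` complementary closed sets, so each contains the component of every one of
its points.
-/

open Set Topology

theorem exists_isOpen_separating_of_notMem_connectedComponentIn {Y : Type*} [TopologicalSpace Y]
    [T2Space Y] {K : Set Y} (hK : IsCompact K) {p q : Y} (hp : p ∈ K) (hq : q ∈ K)
    (hpq : q ∉ connectedComponentIn K p) :
    ∃ U V : Set Y, IsOpen U ∧ IsOpen V ∧ p ∈ U ∧ q ∈ V ∧ K ⊆ U ∪ V ∧ Disjoint U V := by
  have : CompactSpace K := isCompact_iff_compactSpace.1 hK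
  have hpq' : (⟨q, hq⟩ : K) ∉ connectedComponent ⟨p, hp⟩ := fun h ↦
    hpq (connectedComponentIn_eq_image hp ▸ mem_image_of_mem Subtype.val h)
  rw [connectedComponent_eq_iInter_isClopen, mem_iInter] at hpq'
  obtain ⟨⟨Z, hZ, hpZ⟩, hqZ⟩ := not_forall.1 hpq'
  have hdisj : Disjoint (Subtype.val '' Z) (Subtype.val '' Zᶜ) :=
    (disjoint_image_iff Subtype.val_injective).2 disjoint_compl_right
  obtain ⟨U, V, hU, hV, hZU, hZV, hUV⟩ := SeparatedNhds.of_isCompact_isCompact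
    (hZ.1.isCompact.image continuous_subtype_val)
    (hZ.compl.1.isCompact.image continuous_subtype_val) hdisj
  refine ⟨U, V, hU, hV, hZU ⟨_, hpZ, rfl⟩, hZV ⟨_, hqZ, rfl⟩, fun x hx ↦ ?_, hUV⟩
  by_cases hxZ : (⟨x, hx⟩ : K) ∈ Z
  · exact .inl (hZU ⟨_, hxZ, rfl⟩)
  · exact .inr (hZV ⟨_, hxZ, rfl⟩)

theorem disjoint_closure_image_stoneCechUnit_s15 {X Y : Type*} [TopologicalSpace X]
    [TopologicalSpace Y] [CompactSpace Y] [T2Space Y] {f : X → Y} (hf : Continuous f)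
    {A B : Set X} {S T : Set Y} (hS : IsClosed S) (hT : IsClosed T) (hST : Disjoint S T)
    (hA : MapsTo f A S) (hB : MapsTo f B T) :
    Disjoint (closure (stoneCechUnit '' A)) (closure (stoneCechUnit '' B)) := by
  have closure_subset {D : Set X} {R : Set Y} (hR : IsClosed R) (hD : MapsTo f D R) :
      closure (stoneCechUnit '' D) ⊆ stoneCechExtend hf ⁻¹' R := by
    refine closure_minimal (image_subset_iff.2 fun x hx ↦ ?_)
      (hR.preimage (continuous_stoneCechExtend hf))
    simpa only [mem_preimage, stoneCechExtend_stoneCechUnit] using hD hx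
  exact (hST.preimage _).mono (closure_subset hS hA) (closure_subset hT hB)

variable {G}

theorem induce_componentCompl_preconnected {K : Set V} (c : G.ComponentCompl K) :
    (G.induce (c : Set V)).Preconnected := by
  let f : ConnectedComponent.toSimpleGraph c →g G.induce (c : Set V) :=
    { toFun := fun v ↦ ⟨v.1.1, v.1.2, v.2⟩
      map_rel' := fun h ↦ h }
  have hf : Function.Surjective f := fun ⟨v, hv, hvc⟩ ↦ ⟨⟨⟨v, hv⟩, hvc⟩, rfl⟩
  exact (ConnectedComponent.connected_toSimpleGraph c).preconnected.map f hf

theorem biUnion_componentCompl_union_compl {K : Set V} (𝒞 : Set (G.ComponentCompl K)) :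
    (⋃ c ∈ 𝒞, (c : Set V)) ∪ ⋃ c ∈ 𝒞ᶜ, (c : Set V) = Kᶜ := by
  rw [← biUnion_union, union_compl_self]
  ext v
  simp only [mem_iUnion, mem_univ, exists_true_left]
  exact ⟨fun ⟨_, hv⟩ ↦ ComponentCompl.notMem_of_mem hv,
    fun hv ↦ ⟨_, G.componentComplMk_mem hv⟩⟩

theorem disjoint_biUnion_componentCompl_compl {K : Set V} (𝒞 : Set (G.ComponentCompl K)) :
    Disjoint (⋃ c ∈ 𝒞, (c : Set V)) (⋃ c ∈ 𝒞ᶜ, (c : Set V)) :=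
  disjoint_iUnion₂_left.2 fun _ hc ↦ disjoint_iUnion₂_right.2 fun _ hc' ↦
    ComponentCompl.pairwise_disjoint fun h ↦ hc' (h ▸ hc)

namespace OneComplex

/-- The point at parameter `t` on the edge underlying the dart `d`, measured from `d.fst`. -/
def mk (d : G.Dart) (t : unitInterval) : OneComplex G :=
  Quotient.mk (oneComplexSetoid G) (d, t)

theorem exists_mk_eq (x : OneComplex G) : ∃ d t, mk d t = x := by
  obtain ⟨⟨d, t⟩, rfl⟩ := Quotient.exists_rep x
  exact ⟨d, t, rfl⟩

theorem mk_symm (d : G.Dart) (t : unitInterval) : mk d.symm (unitInterval.symm t) = mk d t :=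
  (Quotient.sound (Relation.EqvGen.rel _ _ (.inl ⟨rfl, rfl⟩))).symm

theorem mk_zero_eq {d d' : G.Dart} (h : d.fst = d'.fst) : mk d 0 = mk d' 0 :=
  Quotient.sound (Relation.EqvGen.rel _ _ (.inr ⟨rfl, rfl, h⟩))

theorem continuous_mk (d : G.Dart) : Continuous (mk d) :=
  continuous_quotient_mk'.comp (Continuous.prodMk_right d)

theorem exists_continuous_lift {Y : Type*} [TopologicalSpace Y] (φ : G.Dart → unitInterval → Y)
    (hφ : ∀ d, Continuous (φ d)) (hsymm : ∀ d t, φ d.symm (unitInterval.symm t) = φ d t)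
    (hzero : ∀ d d', d.fst = d'.fst → φ d 0 = φ d' 0) :
    ∃ f : OneComplex G → Y, Continuous f ∧ ∀ d t, f (mk d t) = φ d t := by
  have hker : oneComplexSetoid G ≤ Setoid.ker (Function.uncurry φ) := by
    refine Setoid.eqvGen_le ?_
    rintro ⟨d, t⟩ ⟨d', t'⟩ (⟨rfl, rfl⟩ | ⟨rfl, rfl, h⟩)
    · exact (hsymm d t).symm
    · exact hzero d d' h
  exact ⟨Quotient.lift (Function.uncurry φ) fun _ _ h ↦ hker h,
    (continuous_prod_of_discrete_left.2 hφ).quotient_lift _, fun _ _ ↦ rfl⟩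

/-- The subcomplex of `|G|` induced on a set `W` of vertices, so that `inducedPart G X 𝒞` is the
subcomplex induced on `X ∪ ⋃ 𝒞`. -/
def inducedSubcomplex (W : Set V) : Set (OneComplex G) :=
  {x | ∃ d t, x = mk d t ∧ d.fst ∈ W ∧ d.snd ∈ W}

theorem inducedSubcomplex_mono {W W' : Set V} (h : W ⊆ W') :
    (inducedSubcomplex W : Set (OneComplex G)) ⊆ inducedSubcomplex W' := by
  rintro _ ⟨d, t, rfl, hfst, hsnd⟩
  exact ⟨d, t, rfl, h hfst, h hsnd⟩

theorem isCompact_inducedSubcomplex {W : Set V} (hW : W.Finite) :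
    IsCompact (inducedSubcomplex W : Set (OneComplex G)) := by
  have hfin : {d : G.Dart | d.fst ∈ W ∧ d.snd ∈ W}.Finite :=
    ((hW.prod hW).subset (image_subset_iff.2 fun _ hd ↦ hd)).of_finite_image
      Dart.toProd_injective.injOn
  convert hfin.isCompact_biUnion fun d _ ↦ isCompact_range (continuous_mk d) using 1
  ext x
  simp only [inducedSubcomplex, mem_ofPred_eq, mem_iUnion, mem_range, exists_prop]
  exact ⟨fun ⟨d, t, hx, hd⟩ ↦ ⟨d, hd, t, hx.symm⟩, fun ⟨d, hd, t, hx⟩ ↦ ⟨d, t, hx.symm, hd⟩⟩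

/-- The ball around the vertex `v` that contains the initial segment of length `ε d` of each dart
`d` starting at `v`. -/
def vertexBall (ε : G.Dart → ℝ) (v : V) : Set (OneComplex G) :=
  {x | ∃ d t, x = mk d t ∧ d.fst = v ∧ (t : ℝ) < ε d}

/-- The closed star of the vertex `v` with the balls of radius `ε` around the neighbours of `v`
removed. -/
def shrunkStar (ε : G.Dart → ℝ) (v : V) : Set (OneComplex G) :=
  {x | ∃ d t, x = mk d t ∧ d.fst = v ∧ (t : ℝ) ≤ 1 - ε d.symm}

/-- The union of the shrunken stars of the vertices in `C`. -/
def shrunkStars (ε : G.Dart → ℝ) (C : Set V) : Set (OneComplex G) :=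
  ⋃ v ∈ C, shrunkStar ε v

variable {ε : G.Dart → ℝ}

theorem shrunkStars_mono {C D : Set V} (h : C ⊆ D) : shrunkStars ε C ⊆ shrunkStars ε D :=
  biUnion_subset_biUnion_left h

theorem shrunkStars_union (C D : Set V) :
    shrunkStars ε (C ∪ D) = shrunkStars ε C ∪ shrunkStars ε D :=
  biUnion_union C D (shrunkStar ε)

theorem mk_mem_shrunkStar_or_mem_vertexBall (d : G.Dart) (t : unitInterval) :
    mk d t ∈ shrunkStar ε d.fst ∨ mk d t ∈ vertexBall ε d.snd := by
  rcases le_or_gt (t : ℝ) (1 - ε d.symm) with h | h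
  · exact .inl ⟨d, t, rfl, rfl, h⟩
  · refine .inr ⟨d.symm, unitInterval.symm t, (mk_symm d t).symm, rfl, ?_⟩
    rw [unitInterval.coe_symm_eq]
    linarith

theorem vertexBall_subset_shrunkStar (hε : ∀ d, ε d ≤ 1 / 2) (v : V) :
    vertexBall ε v ⊆ shrunkStar ε v := by
  rintro _ ⟨d, t, rfl, hd, ht⟩
  exact ⟨d, t, rfl, hd, by linarith [hε d, hε d.symm]⟩

theorem shrunkStars_compl_union_vertexBall_union_inducedSubcomplex (hε : ∀ d, ε d ≤ 1 / 2)
    (W : Set V) :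
    shrunkStars ε Wᶜ ∪ ((⋃ v ∈ W, vertexBall ε v) ∪ inducedSubcomplex W) = univ := by
  have of_fst_notMem (d : G.Dart) (t : unitInterval) (hd : d.fst ∉ W) :
      mk d t ∈ shrunkStars ε Wᶜ ∪ ((⋃ v ∈ W, vertexBall ε v) ∪ inducedSubcomplex W) := by
    rcases mk_mem_shrunkStar_or_mem_vertexBall (ε := ε) d t with h | h
    · exact .inl (mem_biUnion hd h)
    · by_cases hd' : d.snd ∈ W
      · exact .inr (.inl (mem_biUnion hd' h))
      · exact .inl (mem_biUnion hd' (vertexBall_subset_shrunkStar hε _ h))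
  refine eq_univ_of_forall fun x ↦ ?_
  obtain ⟨d, t, rfl⟩ := exists_mk_eq x
  by_cases hfst : d.fst ∈ W
  · by_cases hsnd : d.snd ∈ W
    · exact .inr (.inr ⟨d, t, rfl, hfst, hsnd⟩)
    · exact mk_symm d t ▸ of_fst_notMem d.symm (unitInterval.symm t) hsnd
  · exact of_fst_notMem d t hfst

theorem isPreconnected_shrunkStar (v : V) :
    IsPreconnected (shrunkStar ε v) := by
  rcases (shrunkStar ε v).eq_empty_or_nonempty with hempty | ⟨-, d₀, -, -, rfl, -⟩
  · exact hempty ▸ isPreconnected_empty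
  refine isPreconnected_of_forall (mk d₀ 0) ?_
  rintro _ ⟨d, t, rfl, hd, ht⟩
  refine ⟨mk d '' Icc 0 t, ?_, ⟨0, left_mem_Icc.2 t.2.1, mk_zero_eq hd⟩,
    mem_image_of_mem _ (right_mem_Icc.2 t.2.1),
    isPreconnected_Icc.image _ (continuous_mk d).continuousOn⟩
  rintro _ ⟨s, hs, rfl⟩
  exact ⟨d, s, rfl, hd, (Subtype.coe_le_coe.2 hs.2).trans ht⟩

theorem shrunkStar_inter_nonempty_of_adj (hε : ∀ d, ε d ≤ 1 / 2) {v w : V} (h : G.Adj v w) :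
    (shrunkStar ε v ∩ shrunkStar ε w).Nonempty := by
  let d : G.Dart := ⟨(v, w), h⟩
  let t : unitInterval := ⟨1 / 2, by norm_num, by norm_num⟩
  refine ⟨mk d t, ⟨d, t, rfl, rfl, ?_⟩,
    ⟨d.symm, unitInterval.symm t, (mk_symm d t).symm, rfl, ?_⟩⟩
  · change (1 / 2 : ℝ) ≤ _
    linarith [hε d.symm]
  · change (1 - 1 / 2 : ℝ) ≤ 1 - ε d
    linarith [hε d]

theorem isPreconnected_shrunkStars (hε : ∀ d, ε d ≤ 1 / 2) {C : Set V}
    (hC : (G.induce C).Preconnected) : IsPreconnected (shrunkStars ε C) := by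
  rw [shrunkStars, biUnion_eq_iUnion]
  refine IsPreconnected.iUnion_of_reflTransGen (fun v ↦ isPreconnected_shrunkStar v.1)
    fun v w ↦ ?_
  exact Relation.ReflTransGen.mono (fun _ _ h ↦ shrunkStar_inter_nonempty_of_adj hε h)
    _ _ ((reachable_iff_reflTransGen v w).1 (hC v w))

theorem exists_bump_shrunkStars (hε : ∀ d, ε d ∈ Ioc 0 1) (C : Set V) :
    ∃ f : OneComplex G → unitInterval, Continuous f ∧ MapsTo f (shrunkStars ε C) {1} ∧
      MapsTo f (inducedSubcomplex Cᶜ) {0} := by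
  classical
  let ramp (r : ℝ) (t : unitInterval) : unitInterval := projIcc 0 1 zero_le_one (t / r)
  have ramp_zero (r : ℝ) : ramp r 0 = 0 := projIcc_of_le_left _ (by simp)
  have ramp_of_le {r : ℝ} {t : unitInterval} (hr : 0 < r) (h : r ≤ t) : ramp r t = 1 :=
    projIcc_of_right_le _ ((one_le_div hr).2 h)
  have continuous_ramp (r : ℝ) : Continuous (ramp r) :=
    continuous_projIcc.comp (continuous_subtype_val.div_const r)
  let φ (d : G.Dart) (t : unitInterval) : unitInterval :=
    (if d.fst ∈ C then ramp (ε d.symm) (unitInterval.symm t) else 0) ⊔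
      (if d.snd ∈ C then ramp (ε d) t else 0)
  have hφ_zero (d : G.Dart) : φ d 0 = if d.fst ∈ C then 1 else 0 := by
    have : ramp (ε d.symm) 1 = 1 := ramp_of_le (hε d.symm).1 (hε d.symm).2
    simp [φ, ramp_zero, this]
  obtain ⟨f, hf, hfφ⟩ := exists_continuous_lift φ
    (fun d ↦ by
      have := continuous_ramp (ε d)
      have := (continuous_ramp (ε d.symm)).comp unitInterval.continuous_symm
      dsimp only [φ]
      split_ifs <;> fun_prop)
    (fun d t ↦ by simp [φ, max_comm])
    (fun d d' h ↦ by rw [hφ_zero, hφ_zero, h])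
  refine ⟨f, hf, ?_, ?_⟩
  · intro x hx
    obtain ⟨_, hv, d, t, rfl, rfl, ht⟩ := mem_iUnion₂.1 hx
    have : ramp (ε d.symm) (unitInterval.symm t) = 1 :=
      ramp_of_le (hε d.symm).1 (by rw [unitInterval.coe_symm_eq]; linarith)
    simp [hfφ, φ, hv, this, unitInterval.le_one']
  · rintro _ ⟨d, t, rfl, hfst, hsnd⟩
    simp [hfφ, φ, notMem_of_mem_compl hfst, notMem_of_mem_compl hsnd]

theorem disjoint_closure_shrunkStars_inducedSubcomplex (hε : ∀ d, ε d ∈ Ioc 0 1) {C W : Set V}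
    (hCW : Disjoint C W) :
    Disjoint (closure (stoneCechUnit '' shrunkStars ε C))
      (closure (stoneCechUnit '' (inducedSubcomplex W : Set (OneComplex G)))) := by
  obtain ⟨f, hf, hone, hzero⟩ := exists_bump_shrunkStars hε C
  exact disjoint_closure_image_stoneCechUnit_s15 hf isClosed_singleton isClosed_singleton
    (by simp) hone (hzero.mono_left (inducedSubcomplex_mono hCW.subset_compl_left))

/-! ### Compact subsets of the remainder -/

theorem exists_forall_vertexBall_subset {U : V → Set (OneComplex G)}
    (hU : ∀ d : G.Dart, U d.fst ∈ 𝓝 (mk d 0)) :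
    ∃ ε : G.Dart → ℝ, (∀ d, ε d ∈ Ioc 0 (1 / 2)) ∧ ∀ v, vertexBall ε v ⊆ U v := by
  have hball (d : G.Dart) : ∃ δ > 0, Metric.ball 0 δ ⊆ mk d ⁻¹' U d.fst :=
    Metric.mem_nhds_iff.1 ((continuous_mk d).continuousAt.preimage_mem_nhds (hU d))
  choose δ hδ hδU using hball
  refine ⟨fun d ↦ min (δ d) (1 / 2), fun d ↦ ⟨lt_min (hδ d) (by norm_num), min_le_right _ _⟩, ?_⟩
  rintro _ _ ⟨d, t, rfl, rfl, ht⟩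
  apply hδU d
  rw [Metric.mem_ball, Subtype.dist_eq, Icc.coe_zero, dist_zero_right,
    Real.norm_of_nonneg t.2.1]
  exact ht.trans_le (min_le_left _ _)

theorem exists_disjoint_closure_vertexBall {P : Set (StoneCech (OneComplex G))} (hP : IsClosed P)
    (hPG : P ⊆ stoneCechRemainder G) :
    ∃ ε : G.Dart → ℝ, (∀ d, ε d ∈ Ioc 0 (1 / 2)) ∧
      ∀ v, Disjoint P (closure (stoneCechUnit '' vertexBall ε v)) := by
  have hN (v : V) : ∃ N : Set (StoneCech (OneComplex G)), IsClosed N ∧ N ⊆ Pᶜ ∧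
      ∀ d : G.Dart, d.fst = v → N ∈ 𝓝 (stoneCechUnit (mk d 0)) := by
    by_cases hv : ∃ d : G.Dart, d.fst = v
    · obtain ⟨d₀, rfl⟩ := hv
      obtain ⟨N, hN, hNclosed, hNP⟩ := exists_mem_nhds_isClosed_subset
        (hP.isOpen_compl.mem_nhds fun h ↦ hPG h (mem_range_self (mk d₀ 0)))
      exact ⟨N, hNclosed, hNP, fun d hd ↦ mk_zero_eq hd ▸ hN⟩
    · exact ⟨∅, isClosed_empty, empty_subset _, fun d hd ↦ (hv ⟨d, hd⟩).elim⟩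
  choose N hNclosed hNP hN using hN
  obtain ⟨ε, hε, hεN⟩ := exists_forall_vertexBall_subset (U := fun v ↦ stoneCechUnit ⁻¹' N v)
    fun d ↦ continuous_stoneCechUnit.continuousAt.preimage_mem_nhds (hN d.fst d rfl)
  refine ⟨ε, hε, fun v ↦ ?_⟩
  exact disjoint_compl_right.mono_right
    ((closure_minimal (image_subset_iff.2 (hεN v)) (hNclosed v)).trans (hNP v))

/-- The points of the Stone-Čech compactification that, for each finite `X`, are limits of points
in the shrunken stars of the vertices outside `X`. These sets are cofinal among the compact subsets
of the remainder. -/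
def remainderCore (ε : G.Dart → ℝ) : Set (StoneCech (OneComplex G)) :=
  ⋂ X : Finset V, closure (stoneCechUnit '' shrunkStars ε (X : Set V)ᶜ)

theorem isCompact_remainderCore : IsCompact (remainderCore ε) :=
  (isClosed_iInter fun _ ↦ isClosed_closure).isCompact

theorem remainderCore_subset_remainder (hε : ∀ d, ε d ∈ Ioc 0 1) :
    remainderCore ε ⊆ stoneCechRemainder G := by
  classical
  rintro _ hx ⟨x, rfl⟩
  obtain ⟨d, t, rfl⟩ := exists_mk_eq x
  let X : Finset V := {d.fst, d.snd}
  have hX : mk d t ∈ inducedSubcomplex (X : Set V) := ⟨d, t, rfl, by simp [X], by simp [X]⟩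
  exact disjoint_left.1 (disjoint_closure_shrunkStars_inducedSubcomplex hε disjoint_compl_left)
    (mem_iInter.1 hx X) (subset_closure (mem_image_of_mem _ hX))

theorem subset_remainderCore (hε : ∀ d, ε d ≤ 1 / 2) {P : Set (StoneCech (OneComplex G))}
    (hPG : P ⊆ stoneCechRemainder G)
    (hP : ∀ v, Disjoint P (closure (stoneCechUnit '' vertexBall ε v))) :
    P ⊆ remainderCore ε := by
  refine fun p hp ↦ mem_iInter.2 fun X ↦ ?_
  have hcover : p ∈ closure (stoneCechUnit '' (univ : Set (OneComplex G))) :=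
    image_univ ▸ denseRange_stoneCechUnit p
  rw [← shrunkStars_compl_union_vertexBall_union_inducedSubcomplex hε (X : Set V), image_union,
    image_union, closure_union, closure_union, image_iUnion₂] at hcover
  rcases hcover with h | h | h
  · exact h
  · rw [X.finite_toSet.closure_biUnion] at h
    obtain ⟨v, -, hv⟩ := mem_iUnion₂.1 h
    exact (disjoint_left.1 (hP v) hp hv).elim
  · rw [((isCompact_inducedSubcomplex X.finite_toSet).image
      continuous_stoneCechUnit).isClosed.closure_eq] at h
    exact (hPG hp (image_subset_range _ _ h)).elim

theorem exists_subset_remainderCore {P : Set (StoneCech (OneComplex G))} (hP : IsClosed P)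
    (hPG : P ⊆ stoneCechRemainder G) :
    ∃ ε : G.Dart → ℝ, (∀ d, ε d ∈ Ioc 0 (1 / 2)) ∧ P ⊆ remainderCore ε := by
  obtain ⟨ε, hε, hdisj⟩ := exists_disjoint_closure_vertexBall hP hPG
  exact ⟨ε, hε, subset_remainderCore (fun d ↦ (hε d).2) hPG hdisj⟩

theorem exists_closure_shrunkStars_subset {O : Set (StoneCech (OneComplex G))} (hO : IsOpen O)
    (hεO : remainderCore ε ⊆ O) :
    ∃ X : Finset V, closure (stoneCechUnit '' shrunkStars ε (X : Set V)ᶜ) ⊆ O := by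
  have hanti : Antitone fun X : Finset V ↦
      closure (stoneCechUnit '' shrunkStars ε (X : Set V)ᶜ) := fun X Y hXY ↦
    closure_mono (image_mono (shrunkStars_mono (compl_subset_compl.2 (mod_cast hXY))))
  exact exists_subset_nhds_of_compactSpace hanti.directed_ge (fun _ ↦ isClosed_closure)
    fun _ hx ↦ hO.mem_nhds (hεO hx)

/-! ### Separations of finite order -/

variable {X : Finset V}

theorem shrunkStars_subset_inducedPart (𝒞 : Set (G.ComponentCompl (X : Set V))) :
    shrunkStars ε (⋃ c ∈ 𝒞, (c : Set V)) ⊆ inducedPart G X 𝒞 := by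
  refine iUnion₂_subset ?_
  rintro _ hv _ ⟨d, t, rfl, rfl, -⟩
  refine ⟨d, t, rfl, .inr hv, or_iff_not_imp_left.2 fun hd ↦ ?_⟩
  obtain ⟨c, hc, hfst⟩ := mem_iUnion₂.1 hv
  exact mem_biUnion hc (ComponentCompl.mem_of_adj _ _ hfst hd d.adj)

theorem closure_shrunkStars_subset_closure_inducedPart (𝒞 : Set (G.ComponentCompl (X : Set V))) :
    closure (stoneCechUnit '' shrunkStars ε (⋃ c ∈ 𝒞, (c : Set V))) ⊆
      closure (stoneCechUnit '' inducedPart G X 𝒞) :=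
  closure_mono (image_mono (shrunkStars_subset_inducedPart 𝒞))

theorem disjoint_closure_shrunkStars_inducedPart_compl (hε : ∀ d, ε d ∈ Ioc 0 1)
    (𝒞 : Set (G.ComponentCompl (X : Set V))) :
    Disjoint (closure (stoneCechUnit '' shrunkStars ε (⋃ c ∈ 𝒞, (c : Set V))))
      (closure (stoneCechUnit '' inducedPart G X 𝒞ᶜ)) := by
  have hX : Disjoint (⋃ c ∈ 𝒞, (c : Set V)) X :=
    disjoint_iUnion₂_left.2 fun c _ ↦ c.disjoint_right.symm
  exact disjoint_closure_shrunkStars_inducedSubcomplex hε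
    (hX.union_right (disjoint_biUnion_componentCompl_compl 𝒞))

theorem mem_closure_shrunkStars_or_of_mem_remainderCore {p : StoneCech (OneComplex G)}
    (hp : p ∈ remainderCore ε) (𝒞 : Set (G.ComponentCompl (X : Set V))) :
    p ∈ closure (stoneCechUnit '' shrunkStars ε (⋃ c ∈ 𝒞, (c : Set V))) ∨
      p ∈ closure (stoneCechUnit '' shrunkStars ε (⋃ c ∈ 𝒞ᶜ, (c : Set V))) := by
  have := mem_iInter.1 hp X
  rwa [← biUnion_componentCompl_union_compl 𝒞, shrunkStars_union, image_union,
    closure_union] at this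

theorem mem_closure_inducedPart_compl_iff {p : StoneCech (OneComplex G)}
    (hp : p ∈ stoneCechRemainder G) (𝒞 : Set (G.ComponentCompl (X : Set V))) :
    p ∈ closure (stoneCechUnit '' inducedPart G X 𝒞ᶜ) ↔
      p ∉ closure (stoneCechUnit '' inducedPart G X 𝒞) := by
  obtain ⟨ε, hε, hpε⟩ := exists_subset_remainderCore isClosed_singleton
    (singleton_subset_iff.2 hp)
  have hε' (d : G.Dart) : ε d ∈ Ioc 0 1 := Ioc_subset_Ioc_right (by norm_num) (hε d)
  have separates {𝒟 : Set (G.ComponentCompl (X : Set V))}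
      (h : p ∈ closure (stoneCechUnit '' shrunkStars ε (⋃ c ∈ 𝒟, (c : Set V)))) :
      p ∈ closure (stoneCechUnit '' inducedPart G X 𝒟) ∧
        p ∉ closure (stoneCechUnit '' inducedPart G X 𝒟ᶜ) :=
    ⟨closure_shrunkStars_subset_closure_inducedPart 𝒟 h,
      disjoint_left.1 (disjoint_closure_shrunkStars_inducedPart_compl hε' 𝒟) h⟩
  rcases mem_closure_shrunkStars_or_of_mem_remainderCore (singleton_subset_iff.1 hpε) 𝒞 with h | h
  · exact iff_of_false (separates h).2 (not_not_intro (separates h).1)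
  · exact iff_of_true (separates h).1 (compl_compl 𝒞 ▸ (separates h).2)

theorem connectedComponentIn_subset_closure_inducedPart {p : StoneCech (OneComplex G)}
    (hp : p ∈ stoneCechRemainder G) {𝒞 : Set (G.ComponentCompl (X : Set V))}
    (hp𝒞 : p ∈ closure (stoneCechUnit '' inducedPart G X 𝒞)) :
    connectedComponentIn (stoneCechRemainder G) p ⊆
      closure (stoneCechUnit '' inducedPart G X 𝒞) := by
  have hsub := connectedComponentIn_subset (stoneCechRemainder G) p
  refine (isPreconnected_iff_subset_of_disjoint_closed.1 isPreconnected_connectedComponentIn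
    (closure (stoneCechUnit '' inducedPart G X 𝒞)) (closure (stoneCechUnit '' inducedPart G X 𝒞ᶜ))
    isClosed_closure isClosed_closure (fun q hq ↦ ?_) ?_).resolve_right fun h ↦ ?_
  · exact or_iff_not_imp_left.2 (mem_closure_inducedPart_compl_iff (hsub hq) 𝒞).2
  · refine eq_empty_of_forall_notMem fun q ⟨hq, hq𝒞, hq𝒞'⟩ ↦ ?_
    exact (mem_closure_inducedPart_compl_iff (hsub hq) 𝒞).1 hq𝒞' hq𝒞
  · exact (mem_closure_inducedPart_compl_iff hp 𝒞).1 (h (mem_connectedComponentIn hp)) hp𝒞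

theorem exists_closure_shrunkStars_separating (hε : ∀ d, ε d ≤ 1 / 2)
    {p q : StoneCech (OneComplex G)} (hp : p ∈ remainderCore ε) (hq : q ∈ remainderCore ε)
    (hpq : q ∉ connectedComponentIn (remainderCore ε) p) :
    ∃ (X : Finset V) (𝒞 : Set (G.ComponentCompl (X : Set V))),
      p ∈ closure (stoneCechUnit '' shrunkStars ε (⋃ c ∈ 𝒞, (c : Set V))) ∧
      q ∈ closure (stoneCechUnit '' shrunkStars ε (⋃ c ∈ 𝒞ᶜ, (c : Set V))) := by
  obtain ⟨U, W, hU, hW, hpU, hqW, hcover, hUW⟩ :=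
    exists_isOpen_separating_of_notMem_connectedComponentIn isCompact_remainderCore hp hq hpq
  obtain ⟨X, hX⟩ := exists_closure_shrunkStars_subset (hU.union hW) hcover
  have hside (c : G.ComponentCompl (X : Set V)) :
      stoneCechUnit '' shrunkStars ε (c : Set V) ⊆ U ∨
        stoneCechUnit '' shrunkStars ε (c : Set V) ⊆ W := by
    refine isPreconnected_iff_subset_of_disjoint.1
      ((isPreconnected_shrunkStars hε (induce_componentCompl_preconnected c)).image _
        continuous_stoneCechUnit.continuousOn) U W hU hW ?_ (by simp [hUW.inter_eq])
    exact (image_mono (shrunkStars_mono c.disjoint_right.subset_compl_left)).trans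
      (subset_closure.trans hX)
  have closure_disjoint {𝒟 : Set (G.ComponentCompl (X : Set V))}
      {O O' : Set (StoneCech (OneComplex G))} (hO' : IsOpen O') (hOO' : Disjoint O O')
      (h𝒟 : ∀ c ∈ 𝒟, stoneCechUnit '' shrunkStars ε (c : Set V) ⊆ O) :
      Disjoint (closure (stoneCechUnit '' shrunkStars ε (⋃ c ∈ 𝒟, (c : Set V)))) O' := by
    refine (hOO'.mono_left ?_).closure_left hO'
    simpa only [shrunkStars, biUnion_iUnion, image_iUnion, iUnion_subset_iff] using h𝒟
  let 𝒞 : Set (G.ComponentCompl (X : Set V)) :=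
    {c | stoneCechUnit '' shrunkStars ε (c : Set V) ⊆ U}
  refine ⟨X, 𝒞, (mem_closure_shrunkStars_or_of_mem_remainderCore hp 𝒞).resolve_right fun h ↦ ?_,
    (mem_closure_shrunkStars_or_of_mem_remainderCore hq 𝒞).resolve_left fun h ↦ ?_⟩
  · exact disjoint_left.1
      (closure_disjoint hU hUW.symm fun c hc ↦ (hside c).resolve_left hc) h hpU
  · exact disjoint_left.1 (closure_disjoint hW hUW fun c hc ↦ hc) h hqW

end OneComplex

open OneComplex

variable (G)

theorem components_of_remainder_distinguished_general
    (p₁ p₂ : StoneCech (OneComplex G))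
    (h₁ : p₁ ∈ stoneCechRemainder G) (h₂ : p₂ ∈ stoneCechRemainder G)
    (hne : connectedComponentIn (stoneCechRemainder G) p₁ ≠
      connectedComponentIn (stoneCechRemainder G) p₂) :
    ∃ (X : Finset V) (𝒞 : Set (G.ComponentCompl (X : Set V))),
      connectedComponentIn (stoneCechRemainder G) p₁ ⊆
        closure (stoneCechUnit '' inducedPart G X 𝒞) ∧
      connectedComponentIn (stoneCechRemainder G) p₂ ⊆
        closure (stoneCechUnit '' inducedPart G X 𝒞ᶜ) := by
  obtain ⟨ε, hε, hpε⟩ := exists_subset_remainderCore (P := {p₁, p₂}) (toFinite _).isClosed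
    (pair_subset h₁ h₂)
  have hcore : remainderCore ε ⊆ stoneCechRemainder G :=
    remainderCore_subset_remainder fun d ↦ Ioc_subset_Ioc_right (by norm_num) (hε d)
  have hnotMem : p₂ ∉ connectedComponentIn (remainderCore ε) p₁ := fun h ↦
    hne (connectedComponentIn_eq (connectedComponentIn_mono p₁ hcore h))
  obtain ⟨X, 𝒞, hp₁, hp₂⟩ := exists_closure_shrunkStars_separating (fun d ↦ (hε d).2)
    (hpε (mem_insert _ _)) (hpε (mem_insert_of_mem _ rfl)) hnotMem
  exact ⟨X, 𝒞,
    connectedComponentIn_subset_closure_inducedPart h₁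
      (closure_shrunkStars_subset_closure_inducedPart 𝒞 hp₁),
    connectedComponentIn_subset_closure_inducedPart h₂
      (closure_shrunkStars_subset_closure_inducedPart 𝒞ᶜ hp₂)⟩

/-- Distinct connected components of the Stone-Čech remainder `G*` are distinguished by a
finite-order separation of `G`: there are a finite `X` and a set `𝒞` of components of `G − X`
with `C₁ ⊆ closure (stoneCechUnit '' G[X, 𝒞])` and `C₂ ⊆ closure (stoneCechUnit '' G[X, 𝒞ᶜ])`. -/
theorem components_of_remainder_distinguished
    [Infinite V] (hG : G.Connected)
    (p₁ p₂ : StoneCech (OneComplex G))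
    (h₁ : p₁ ∈ stoneCechRemainder G) (h₂ : p₂ ∈ stoneCechRemainder G)
    (hne : connectedComponentIn (stoneCechRemainder G) p₁ ≠
      connectedComponentIn (stoneCechRemainder G) p₂) :
    ∃ (X : Finset V) (𝒞 : Set (G.ComponentCompl (X : Set V))),
      connectedComponentIn (stoneCechRemainder G) p₁ ⊆
        closure (stoneCechUnit '' inducedPart G X 𝒞) ∧
      connectedComponentIn (stoneCechRemainder G) p₂ ⊆
        closure (stoneCechUnit '' inducedPart G X 𝒞ᶜ) := by
  exact components_of_remainder_distinguished_general G p₁ p₂ h₁ h₂ hne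
end
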